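/- Let U be a clopen partition of X, N ∈ ℕ, s ∈ ℝ, f ∈ C(X), and let Z ⊆ X be analytic. Then M_N^s(U,f,Z) = sup{ M_N^s(U,f,K) : K ⊆ Z, K compact }. -/

import Mathlib

open Set Filter
open scoped ENNReal

section Defs
variable {X : Type*} [MetricSpace X]

/-- The Bowen ball of order `n` and radius `ε` centered at `x`. -/
def bowenBall (T : X → X) (n : ℕ) (ε : ℝ) (x : X) : Set X :=
  {y | ∀ i < n, dist (T^[i] x) (T^[i] y) < ε}

/-- Birkhoff sum `f_n(x) = ∑_{j<n} f(T^j x)`. -/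
def birkhoff (T : X → X) (f : X → ℝ) (n : ℕ) (x : X) : ℝ :=
  ∑ j ∈ Finset.range n, f (T^[j] x)

/-- Weight `exp(-s n + sup_{B_n(x,ε)} f_n)` of a Bowen ball, as `ℝ≥0∞`. -/
noncomputable def ballWeight (T : X → X) (f : X → ℝ) (s ε : ℝ) (p : X × ℕ) : ℝ≥0∞ :=
  ENNReal.ofReal (Real.exp (-(s * p.2) + sSup (birkhoff T f p.2 '' bowenBall T p.2 ε p.1)))

/-- `D` is a countable cover of `Z` by Bowen balls of radius `ε` and orders `≥ N`. -/
def IsBowenCover (T : X → X) (ε : ℝ) (N : ℕ) (Z : Set X) (D : Set (X × ℕ)) : Prop :=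
  D.Countable ∧ (∀ p ∈ D, N ≤ p.2) ∧ Z ⊆ ⋃ p ∈ D, bowenBall T p.2 ε p.1

/-- `M(Z,f,s,N,ε)`. -/
noncomputable def bowenM (T : X → X) (f : X → ℝ) (Z : Set X) (s : ℝ) (N : ℕ) (ε : ℝ) : ℝ≥0∞ :=
  ⨅ (D : Set (X × ℕ)) (_ : IsBowenCover T ε N Z D), ∑' p : D, ballWeight T f s ε p

/-- `m(Z,f,s,ε) = lim_{N→∞} M(Z,f,s,N,ε)` (an increasing limit). -/
noncomputable def bowenm (T : X → X) (f : X → ℝ) (Z : Set X) (s ε : ℝ) : ℝ≥0∞ :=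
  ⨆ N : ℕ, bowenM T f Z s N ε

/-- `P_B(T,f,Z,ε)`, the critical exponent. -/
noncomputable def bowenPressEps (T : X → X) (f : X → ℝ) (Z : Set X) (ε : ℝ) : ℝ :=
  sInf {s : ℝ | bowenm T f Z s ε = 0}

/-- Bowen topological pressure `P_B(T,f,Z) = lim_{ε→0} P_B(T,f,Z,ε)` (an increasing limit). -/
noncomputable def bowenPressure (T : X → X) (f : X → ℝ) (Z : Set X) : ℝ :=
  ⨆ ε ∈ Ioi (0:ℝ), bowenPressEps T f Z ε

/-- `E` is an `(n,ε)`-separated subset of `Z`. -/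
def IsSeparated (T : X → X) (n : ℕ) (ε : ℝ) (Z : Set X) (E : Finset X) : Prop :=
  ↑E ⊆ Z ∧ ∀ x ∈ E, ∀ y ∈ E, x ≠ y → ∃ i < n, ε < dist (T^[i] x) (T^[i] y)

/-- `P_n(T,f,Z,ε)`. -/
noncomputable def ucPn (T : X → X) (f : X → ℝ) (Z : Set X) (n : ℕ) (ε : ℝ) : ℝ :=
  sSup {r | ∃ E : Finset X, IsSeparated T n ε Z E ∧ r = ∑ x ∈ E, Real.exp (birkhoff T f n x)}

/-- `P(T,f,Z,ε)`. -/
noncomputable def ucPressEps (T : X → X) (f : X → ℝ) (Z : Set X) (ε : ℝ) : ℝ :=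
  Filter.limsup (fun n : ℕ => Real.log (ucPn T f Z n ε) / n) Filter.atTop

/-- Upper capacity topological pressure `P(T,f,Z)`. -/
noncomputable def ucPressure (T : X → X) (f : X → ℝ) (Z : Set X) : ℝ :=
  ⨆ ε ∈ Ioi (0:ℝ), ucPressEps T f Z ε

/-- The weighted quantity `W(K,f,s,N,ε)`: the infimum of `∑ c_i exp(-s n_i + sup_{B_i} f_{n_i})`
over countable families `{(x_i, n_i, c_i)}` with `n_i ≥ N`, `c_i > 0` and
`∑ c_i χ_{B_{n_i}(x_i,ε)} ≥ χ_K`. -/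
noncomputable def bowenW (T : X → X) (f : X → ℝ) (K : Set X) (s : ℝ) (N : ℕ) (ε : ℝ) : ℝ≥0∞ :=
  ⨅ (D : Set (X × ℕ × ℝ)) (_ : D.Countable ∧ (∀ p ∈ D, N ≤ p.2.1 ∧ 0 < p.2.2) ∧
      ∀ z ∈ K, 1 ≤ ∑' p : D,
        (bowenBall T p.1.2.1 ε p.1.1).indicator (fun _ => ENNReal.ofReal p.1.2.2) z),
    ∑' p : D, ENNReal.ofReal p.1.2.2 * ballWeight T f s ε (p.1.1, p.1.2.1)

noncomputable def bowenw (T : X → X) (f : X → ℝ) (K : Set X) (s ε : ℝ) : ℝ≥0∞ :=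
  ⨆ N : ℕ, bowenW T f K s N ε

noncomputable def weightedPressEps (T : X → X) (f : X → ℝ) (K : Set X) (ε : ℝ) : ℝ :=
  sInf {s : ℝ | bowenw T f K s ε = 0}

/-- Weighted topological pressure `P_W(T,f,K)`. -/
noncomputable def weightedPressure (T : X → X) (f : X → ℝ) (K : Set X) : ℝ :=
  ⨆ ε ∈ Ioi (0:ℝ), weightedPressEps T f K ε

/-- The variant `𝓜(Z,f,s,N,ε)` of `bowenM` using the value of `f_{n_i}` at the center. -/
noncomputable def bowenMc (T : X → X) (f : X → ℝ) (Z : Set X) (s : ℝ) (N : ℕ) (ε : ℝ) : ℝ≥0∞ :=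
  ⨅ (D : Set (X × ℕ)) (_ : IsBowenCover T ε N Z D),
    ∑' p : D, ENNReal.ofReal (Real.exp (-(s * (p : X × ℕ).2) + birkhoff T f (p : X × ℕ).2 (p : X × ℕ).1))

/-- The local measure-theoretic pressure
`P_μ(T,f,x) = lim_{ε→0} liminf_n (1/n) log (e^{f_n(x)} / μ(B_n(x,ε)))`. -/
noncomputable def measPressAt [MeasurableSpace X] (T : X → X) (f : X → ℝ) (μ : MeasureTheory.Measure X) (x : X) : ℝ :=
  ⨆ ε ∈ Ioi (0:ℝ),
    Filter.liminf (fun n : ℕ =>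
      (birkhoff T f n x - Real.log (μ (bowenBall T n ε x)).toReal) / n) Filter.atTop

/-- Measure-theoretic pressure `P_μ(T,f) = ∫ P_μ(T,f,x) dμ(x)`. -/
noncomputable def measPressure [MeasurableSpace X] (T : X → X) (f : X → ℝ) (μ : MeasureTheory.Measure X) : ℝ :=
  ∫ x, measPressAt T f μ x ∂μ

end Defs

section Symbolic
variable {X : Type*} [MetricSpace X]

/-- The cylinder `X(U) = U_1 ∩ T⁻¹U_2 ∩ … ∩ T^{-(n-1)}U_n` of a string `U`. -/
def cylinder (T : X → X) (U : Σ n : ℕ, Fin n → Set X) : Set X :=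
  ⋂ j : Fin U.1, T^[j.1] ⁻¹' U.2 j

/-- The weight `exp(-s m(U) + sup_{X(U)} f_{m(U)})` of a string, with the convention that
the weight is `0` when `X(U) = ∅` (i.e. the sup is `-∞`). -/
noncomputable def cylWeight (T : X → X) (f : X → ℝ) (s : ℝ) (U : Σ n : ℕ, Fin n → Set X) : ℝ≥0∞ :=
  haveI := Classical.propDecidable (cylinder T U = ∅)
  if cylinder T U = ∅ then 0
  else ENNReal.ofReal (Real.exp (-(s * U.1) + sSup (birkhoff T f U.1 '' cylinder T U)))

/-- `M_N^s(𝒰,f,Z)`: infimum over families `Λ` of strings of length `≥ N` in the alphabet `𝒰`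
whose cylinders cover `Z`. -/
noncomputable def MUN (T : X → X) (f : X → ℝ) (𝒰 : Finset (Set X)) (s : ℝ) (N : ℕ)
    (Z : Set X) : ℝ≥0∞ :=
  ⨅ (Λ : Set (Σ n : ℕ, Fin n → Set X))
    (_ : Λ.Countable ∧ (∀ V ∈ Λ, N ≤ V.1 ∧ ∀ j, V.2 j ∈ 𝒰) ∧ Z ⊆ ⋃ V ∈ Λ, cylinder T V),
    ∑' V : Λ, cylWeight T f s V

/-- A finite partition of `X` into clopen sets. -/
def IsClopenPartition (𝒰 : Finset (Set X)) : Prop :=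
  (∀ A ∈ 𝒰, IsClopen A) ∧ (⋃ A ∈ 𝒰, A) = Set.univ ∧ (𝒰 : Set (Set X)).PairwiseDisjoint id

end Symbolic

section Entropy
variable {X : Type*} [MetricSpace X] [MeasurableSpace X]

/-- Entropy of a finite collection of sets w.r.t. a measure. -/
noncomputable def partEntropy (μ : MeasureTheory.Measure X) (P : Finset (Set X)) : ℝ :=
  ∑ A ∈ P, -((μ A).toReal * Real.log (μ A).toReal)

/-- `P` is a finite measurable partition of `X` (mod `μ`-null sets). -/
def IsMeasPartition (μ : MeasureTheory.Measure X) (P : Finset (Set X)) : Prop :=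
  (∀ A ∈ P, MeasurableSet A) ∧ μ (⋃ A ∈ P, A)ᶜ = 0 ∧ (P : Set (Set X)).PairwiseDisjoint id

/-- The dynamical refinement `⋁_{i=0}^{n-1} T^{-i} P`. -/
noncomputable def dynRefine (T : X → X) (P : Finset (Set X)) (n : ℕ) : Finset (Set X) := by
  classical
  exact (Finset.univ : Finset (Fin n → {A // A ∈ P})).image
    fun g => ⋂ i : Fin n, T^[i.1] ⁻¹' (g i : Set X)

/-- Kolmogorov–Sinai measure-theoretic entropy `h_μ(T)`, using the fact that the defining
limit `lim_n H(⋁_{i<n} T^{-i}P)/n` equals the infimum over `n ≥ 1`. -/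
noncomputable def ksEntropy (T : X → X) (μ : MeasureTheory.Measure X) : ℝ :=
  ⨆ P ∈ {P : Finset (Set X) | IsMeasPartition μ P},
    ⨅ n ∈ Ici (1 : ℕ), partEntropy μ (dynRefine T P n) / n

end Entropy


/-!
The set function `Z ↦ M_N^s(𝒰, f, Z)` is a Choquet capacity, and analytic sets are capacitable. Only
continuity along increasing sequences `Z₀ ⊆ Z₁ ⊆ ⋯` needs work. It rests on cylinders forming a net:
two cylinders that meet are nested. Hence from covers `Λ` of `A` and `Γ` of `B` the maximal
cylinders of `Λ ∪ Γ` cover `A ∪ B`, and what is left over, counted with multiplicity, still covers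
`A ∩ B`. Take covers `Λ n` of `Z n` that are optimal up to `δ n`, with `∑ δ n ≤ ε`, and merge them one
after the other, keeping only maximal cylinders. Each merge produces leftovers covering
`Z n ∩ Z (n + 1) = Z n`, so the excess over `M_N^s(𝒰, f, Z n)` stays at most `ε`. The maximal
cylinders of `⋃ n, Λ n` cover `⋃ n, Z n`, and each of them belongs to all but finitely many of the
merged families, so their total weight is at most `⨆ n, M_N^s(𝒰, f, Z n) + ε`.
-/

section ChoquetCapacity

variable {X β : Type*} [TopologicalSpace X] [CompleteLinearOrder β]

/-- A Choquet capacity on a topological space, with values in a complete linear order. Continuity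
along decreasing sequences of compact sets is replaced by outer regularity on compact sets. -/
structure IsChoquetCapacity (μ : Set X → β) : Prop where
  mono : Monotone μ
  iUnion_le : ∀ Z : ℕ → Set X, Monotone Z → μ (⋃ n, Z n) ≤ ⨆ n, μ (Z n)
  iInf_isOpen_le : ∀ K, IsCompact K → ⨅ (U : Set X) (_ : IsOpen U ∧ K ⊆ U), μ U ≤ μ K

theorem isCompact_Iic_of_orderBot {α : Type*} [TopologicalSpace α] [Preorder α] [OrderBot α]
    [CompactIccSpace α] (a : α) : IsCompact (Iic a) :=
  Icc_bot (a := a) ▸ isCompact_Icc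

theorem exists_initialBox_subset_of_Iic_subset {O : Set (ℕ → ℕ)} (hO : IsOpen O) {b : ℕ → ℕ}
    (hb : Iic b ⊆ O) : ∃ k, {x : ℕ → ℕ | ∀ i < k, x i ≤ b i} ⊆ O := by
  let := PiNat.metricSpaceNatNat
  obtain ⟨δ, hδ, hsub⟩ := (isCompact_Iic_of_orderBot b).exists_thickening_subset_open hO hb
  obtain ⟨k, hk⟩ := exists_pow_lt_of_lt_one hδ one_half_lt_one
  refine ⟨k, fun x hx => hsub (Metric.mem_thickening_iff.2 ⟨x ⊓ b, mem_Iic.2 inf_le_right, ?_⟩)⟩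
  have hagree : x ∈ PiNat.cylinder (x ⊓ b) k := fun i hi => (inf_eq_left.2 (hx i hi)).symm
  exact (PiNat.mem_cylinder_iff_dist_le.1 hagree).trans_lt hk

namespace IsChoquetCapacity

variable {μ : Set X → β}

theorem exists_lt_image_inter_le (hμ : IsChoquetCapacity μ) (g : (ℕ → ℕ) → X) {c : β} (k : ℕ)
    {B : Set (ℕ → ℕ)} (hB : c < μ (g '' B)) : ∃ m, c < μ (g '' (B ∩ {x | x k ≤ m})) := by
  have hmono : Monotone fun m => g '' (B ∩ {x | x k ≤ m}) := fun m m' hm =>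
    image_mono (inter_subset_inter_right B fun _ hx => le_trans hx hm)
  have hunion : g '' B ⊆ ⋃ m, g '' (B ∩ {x | x k ≤ m}) :=
    image_subset_iff.2 fun x hx => mem_iUnion.2 ⟨x k, mem_image_of_mem g ⟨hx, le_refl (x k)⟩⟩
  exact lt_iSup_iff.1 (hB.trans_le ((hμ.mono hunion).trans (hμ.iUnion_le _ hmono)))

theorem exists_forall_lt_image_initialBox (hμ : IsChoquetCapacity μ) {g : (ℕ → ℕ) → X} {c : β}
    (hc : c < μ (range g)) : ∃ b : ℕ → ℕ, ∀ k, c < μ (g '' {x | ∀ i < k, x i ≤ b i}) := by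
  choose! m hm using fun k (B : Set (ℕ → ℕ)) => hμ.exists_lt_image_inter_le g (c := c) k (B := B)
  let box : ℕ → Set (ℕ → ℕ) := Nat.rec univ fun k B => B ∩ {x | x k ≤ m k B}
  have hbox : ∀ k, box k = {x | ∀ i < k, x i ≤ m i (box i)} := by
    intro k
    induction k with
    | zero => simp [box]
    | succ k ih =>
      have hsucc : box (k + 1) = box k ∩ {x | x k ≤ m k (box k)} := rfl
      ext x
      simp only [hsucc, mem_inter_iff, mem_ofPred_eq, Nat.forall_lt_succ_right]
      rw [ih, mem_ofPred_eq]
  refine ⟨fun k => m k (box k), fun k => hbox k ▸ ?_⟩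
  induction k with
  | zero => simpa [box] using hc
  | succ k ih => exact hm k (box k) ih

theorem exists_isCompact_le (hμ : IsChoquetCapacity μ) {g : (ℕ → ℕ) → X} (hg : Continuous g) {c : β}
    (hc : c < μ (range g)) : ∃ K ⊆ range g, IsCompact K ∧ c ≤ μ K := by
  obtain ⟨b, hb⟩ := hμ.exists_forall_lt_image_initialBox hc
  have hcompact : IsCompact (g '' Iic b) := (isCompact_Iic_of_orderBot b).image hg
  refine ⟨g '' Iic b, image_subset_range g _, hcompact, ?_⟩
  refine le_trans (le_iInf₂ fun U hU => ?_) (hμ.iInf_isOpen_le _ hcompact)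
  obtain ⟨k, hk⟩ :=
    exists_initialBox_subset_of_Iic_subset (hU.1.preimage hg) (image_subset_iff.1 hU.2)
  exact (hb k).le.trans (hμ.mono (image_subset_iff.2 hk))

theorem eq_iSup_isCompact [DenselyOrdered β] (hμ : IsChoquetCapacity μ) {Z : Set X}
    (hZ : MeasureTheory.AnalyticSet Z) :
    μ Z = ⨆ (K : Set X) (_ : K ⊆ Z ∧ IsCompact K), μ K := by
  refine le_antisymm ?_ (iSup₂_le fun K hK => hμ.mono hK.1)
  rw [MeasureTheory.AnalyticSet] at hZ
  obtain rfl | ⟨g, hg, rfl⟩ := hZ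
  · exact le_iSup₂_of_le ∅ ⟨subset_rfl, isCompact_empty⟩ le_rfl
  · refine le_of_forall_lt_imp_le_of_dense fun c hc => ?_
    obtain ⟨K, hKsub, hK, hcK⟩ := hμ.exists_isCompact_le hg hc
    exact le_iSup₂_of_le K ⟨hKsub, hK⟩ hcK

end IsChoquetCapacity

end ChoquetCapacity

section Tsum

variable {S : Type*} (w : S → ℝ≥0∞)

theorem tsum_add_tsum_inter_union_sdiff_le {P Λ Γ : Set S} (hP : P ⊆ Λ ∪ Γ) :
    (∑' s : P, w s) + ∑' s : ↥(Λ ∩ Γ ∪ (Λ ∪ Γ) \ P), w s ≤ (∑' s : Λ, w s) + ∑' s : Γ, w s :=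
  calc (∑' s : P, w s) + ∑' s : ↥(Λ ∩ Γ ∪ (Λ ∪ Γ) \ P), w s
      ≤ (∑' s : P, w s) + ((∑' s : ↥(Λ ∩ Γ), w s) + ∑' s : ↥((Λ ∪ Γ) \ P), w s) := by
        gcongr
        exact ENNReal.tsum_union_le w _ _
    _ = (∑' s : ↥(P ∪ (Λ ∪ Γ) \ P), w s) + ∑' s : ↥(Λ ∩ Γ), w s := by
        rw [ENNReal.summable.tsum_union_disjoint disjoint_sdiff_right ENNReal.summable]
        ring
    _ = (∑' s : Λ, w s) + ∑' s : Γ, w s := by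
        rw [union_sdiff_cancel hP]
        simp only [tsum_subtype, ← ENNReal.tsum_add]
        exact tsum_congr (congrFun (indicator_union_add_inter w Λ Γ))

theorem tsum_le_of_forall_eventually_mem {P : Set S} {Q : ℕ → Set S} {c : ℝ≥0∞}
    (hPQ : ∀ s ∈ P, ∀ᶠ n in atTop, s ∈ Q n) (hQ : ∀ n, ∑' s : Q n, w s ≤ c) :
    ∑' s : P, w s ≤ c := by
  rw [tsum_subtype, ENNReal.tsum_eq_iSup_sum]
  refine iSup_le fun F => ?_
  have hev : ∀ᶠ n in atTop, ∀ s ∈ F, s ∈ P → s ∈ Q n :=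
    (eventually_all_finset F).2 fun s _ => eventually_imp_distrib_left.2 (hPQ s)
  obtain ⟨n, hn⟩ := hev.exists
  calc ∑ s ∈ F, P.indicator w s
      ≤ ∑ s ∈ F, (Q n).indicator w s := Finset.sum_le_sum fun s hs =>
        indicator_apply_le' (fun hsP => (indicator_of_mem (hn s hs hsP) w).ge) fun _ => zero_le
    _ ≤ ∑' s, (Q n).indicator w s := ENNReal.sum_le_tsum F
    _ = ∑' s : Q n, w s := (tsum_subtype (Q n) w).symm
    _ ≤ c := hQ n

end Tsum

section Net

variable {X S : Type*} {C : S → Set X} {level : S → ℕ} {𝒜 : Set S} {w : S → ℝ≥0∞}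

/-- The indices in `𝒜` label a net of sets `C s`, arranged in levels: a set of higher level is
contained in every set of lower level that it meets, and distinct indices of equal level label
disjoint sets. -/
structure IsNetOn (C : S → Set X) (level : S → ℕ) (𝒜 : Set S) : Prop where
  subset_of_level_lt : ∀ s ∈ 𝒜, ∀ t ∈ 𝒜, level s < level t → (C s ∩ C t).Nonempty → C t ⊆ C s
  eq_of_level_eq : ∀ s ∈ 𝒜, ∀ t ∈ 𝒜, level s = level t → (C s ∩ C t).Nonempty → s = t

/-- `Λ` is a countable subfamily of `𝒜` whose sets `C s` cover `Z`. -/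
def IsCountableCover (C : S → Set X) (𝒜 : Set S) (Z : Set X) (Λ : Set S) : Prop :=
  Λ.Countable ∧ (∀ s ∈ Λ, s ∈ 𝒜) ∧ Z ⊆ ⋃ s ∈ Λ, C s

/-- The content of `Z`: the infimum of the total weight of countable covers of `Z` by sets `C s`
with `s ∈ 𝒜`, equal to `⊤` if there is no such cover. -/
noncomputable def coverContent (C : S → Set X) (w : S → ℝ≥0∞) (𝒜 : Set S) (Z : Set X) : ℝ≥0∞ :=
  ⨅ (Λ : Set S) (_ : IsCountableCover C 𝒜 Z Λ), ∑' s : Λ, w s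

/-- The indices in `Λ` whose set is contained in no set of `Λ` of lower level. In a net these label
the maximal sets of the family. -/
def netRoots (C : S → Set X) (level : S → ℕ) (Λ : Set S) : Set S :=
  {s ∈ Λ | ∀ t ∈ Λ, level t < level s → ¬ C s ⊆ C t}

/-- The families obtained from `Λ 0` by successively adjoining `Λ 1, Λ 2, …`, each time discarding
all indices but the roots. -/
def mergedRoots (C : S → Set X) (level : S → ℕ) (Λ : ℕ → Set S) : ℕ → Set S
  | 0 => Λ 0
  | n + 1 => netRoots C level (mergedRoots C level Λ n ∪ Λ (n + 1))

theorem netRoots_subset (Λ : Set S) : netRoots C level Λ ⊆ Λ :=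
  sep_subset _ _

theorem mem_netRoots_of_subset {Λ Γ : Set S} (hΛΓ : Λ ⊆ Γ) {s : S} (hs : s ∈ netRoots C level Γ)
    (hsΛ : s ∈ Λ) : s ∈ netRoots C level Λ :=
  ⟨hsΛ, fun t ht => hs.2 t (hΛΓ ht)⟩

theorem biUnion_subset_biUnion_netRoots (C : S → Set X) (level : S → ℕ) (Λ : Set S) :
    ⋃ s ∈ Λ, C s ⊆ ⋃ s ∈ netRoots C level Λ, C s := by
  intro x hx
  obtain ⟨t, ⟨htΛ, hxt⟩, hmin⟩ := exists_minimalFor_of_wellFoundedLT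
    (fun s => s ∈ Λ ∧ x ∈ C s) level (by simpa using hx)
  refine mem_biUnion ⟨htΛ, fun s hs hlt hsub => ?_⟩ hxt
  exact hlt.not_ge (hmin ⟨hs, hsub hxt⟩ hlt.le)

theorem mergedRoots_subset_iUnion (Λ : ℕ → Set S) (n : ℕ) :
    mergedRoots C level Λ n ⊆ ⋃ i, Λ i := by
  induction n with
  | zero => exact subset_iUnion Λ 0
  | succ n ih => exact (netRoots_subset _).trans (union_subset ih (subset_iUnion Λ (n + 1)))

theorem eventually_mem_mergedRoots {Λ : ℕ → Set S} {s : S}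
    (hs : s ∈ netRoots C level (⋃ n, Λ n)) : ∀ᶠ n in atTop, s ∈ mergedRoots C level Λ n := by
  have hmerge (n : ℕ) (hsn : s ∈ mergedRoots C level Λ n ∪ Λ (n + 1)) :
      s ∈ mergedRoots C level Λ (n + 1) :=
    mem_netRoots_of_subset
      (union_subset (mergedRoots_subset_iUnion Λ n) (subset_iUnion Λ (n + 1))) hs hsn
  obtain ⟨m, hm⟩ := mem_iUnion.1 hs.1
  filter_upwards [eventually_ge_atTop m] with n hmn
  induction n, hmn using Nat.le_induction with
  | base =>
    cases m with
    | zero => exact hm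
    | succ m => exact hmerge m (Or.inr hm)
  | succ n _ ih => exact hmerge n (Or.inl ih)

namespace IsCountableCover

variable {A B : Set X} {Λ Γ : Set S}

theorem mono (hΛ : IsCountableCover C 𝒜 B Λ) (hAB : A ⊆ B) : IsCountableCover C 𝒜 A Λ :=
  ⟨hΛ.1, hΛ.2.1, hAB.trans hΛ.2.2⟩

theorem iUnion {Z : ℕ → Set X} {Λ : ℕ → Set S} (hΛ : ∀ n, IsCountableCover C 𝒜 (Z n) (Λ n)) :
    IsCountableCover C 𝒜 (⋃ n, Z n) (⋃ n, Λ n) := by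
  refine ⟨countable_iUnion fun n => (hΛ n).1, fun s hs => ?_, iUnion_subset fun n => ?_⟩
  · obtain ⟨n, hn⟩ := mem_iUnion.1 hs
    exact (hΛ n).2.1 s hn
  · exact (hΛ n).2.2.trans (biUnion_subset_biUnion_left (subset_iUnion Λ n))

theorem netRoots (hΛ : IsCountableCover C 𝒜 A Λ) (level : S → ℕ) :
    IsCountableCover C 𝒜 A (netRoots C level Λ) :=
  ⟨hΛ.1.mono (netRoots_subset Λ), fun s hs => hΛ.2.1 s hs.1,
    hΛ.2.2.trans (biUnion_subset_biUnion_netRoots C level Λ)⟩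

theorem union_of_right (hΛ : IsCountableCover C 𝒜 A Λ) (hΓ : IsCountableCover C 𝒜 B Γ) :
    IsCountableCover C 𝒜 B (Λ ∪ Γ) :=
  ⟨hΛ.1.union hΓ.1, fun s hs => hs.elim (hΛ.2.1 s) (hΓ.2.1 s),
    hΓ.2.2.trans (biUnion_subset_biUnion_left subset_union_right)⟩

theorem mergedRoots {Z : ℕ → Set X} {Λ : ℕ → Set S}
    (hΛ : ∀ n, IsCountableCover C 𝒜 (Z n) (Λ n)) (level : S → ℕ) (n : ℕ) :
    IsCountableCover C 𝒜 (Z n) (mergedRoots C level Λ n) := by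
  induction n with
  | zero => exact hΛ 0
  | succ n ih => exact (ih.union_of_right (hΛ (n + 1))).netRoots level

theorem coverContent_le_tsum (hΛ : IsCountableCover C 𝒜 A Λ) :
    coverContent C w 𝒜 A ≤ ∑' s : Λ, w s :=
  iInf₂_le Λ hΛ

end IsCountableCover

theorem coverContent_mono (C : S → Set X) (w : S → ℝ≥0∞) (𝒜 : Set S) :
    Monotone (coverContent C w 𝒜) := fun _ _ hAB =>
  le_iInf₂ fun _ hΛ => (hΛ.mono hAB).coverContent_le_tsum

theorem exists_isCountableCover_tsum_le {Z : Set X} (hZ : coverContent C w 𝒜 Z ≠ ∞) {δ : ℝ≥0∞}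
    (hδ : δ ≠ 0) :
    ∃ Λ, IsCountableCover C 𝒜 Z Λ ∧ ∑' s : Λ, w s ≤ coverContent C w 𝒜 Z + δ := by
  obtain ⟨Λ, hlt⟩ := iInf_lt_iff.1 (ENNReal.lt_add_right hZ hδ)
  obtain ⟨hΛ, hlt⟩ := iInf_lt_iff.1 hlt
  exact ⟨Λ, hΛ, hlt.le⟩

theorem iInf_isOpen_coverContent_le [TopologicalSpace X] (hC : ∀ s ∈ 𝒜, IsOpen (C s)) (Z : Set X) :
    ⨅ (U : Set X) (_ : IsOpen U ∧ Z ⊆ U), coverContent C w 𝒜 U ≤ coverContent C w 𝒜 Z :=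
  le_iInf₂ fun Λ ⟨hcount, hsub, hcov⟩ => iInf₂_le_of_le (⋃ s ∈ Λ, C s)
    ⟨isOpen_biUnion fun s hs => hC s (hsub s hs), hcov⟩
    (IsCountableCover.coverContent_le_tsum ⟨hcount, hsub, subset_rfl⟩)

namespace IsNetOn

theorem isCountableCover_inter (hC : IsNetOn C level 𝒜) {A B : Set X} {Λ Γ : Set S}
    (hΛ : IsCountableCover C 𝒜 A Λ) (hΓ : IsCountableCover C 𝒜 B Γ) :
    IsCountableCover C 𝒜 (A ∩ B) (Λ ∩ Γ ∪ (Λ ∪ Γ) \ netRoots C level (Λ ∪ Γ)) := by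
  have hsub : Λ ∩ Γ ∪ (Λ ∪ Γ) \ netRoots C level (Λ ∪ Γ) ⊆ Λ ∪ Γ :=
    union_subset (inter_subset_left.trans subset_union_left) sdiff_subset
  have hΛΓ := hΛ.union_of_right hΓ
  refine ⟨hΛΓ.1.mono hsub, fun s hs => hΛΓ.2.1 s (hsub hs), fun x ⟨hxA, hxB⟩ => ?_⟩
  obtain ⟨s, hs, hxs⟩ := mem_iUnion₂.1 (hΛ.2.2 hxA)
  obtain ⟨t, ht, hxt⟩ := mem_iUnion₂.1 (hΓ.2.2 hxB)
  have hs𝒜 := hΛ.2.1 s hs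
  have ht𝒜 := hΓ.2.1 t ht
  obtain hlt | heq | hgt := lt_trichotomy (level s) (level t)
  · refine mem_biUnion (Or.inr ⟨Or.inr ht, fun hroot => ?_⟩) hxt
    exact hroot.2 s (Or.inl hs) hlt (hC.subset_of_level_lt s hs𝒜 t ht𝒜 hlt ⟨x, hxs, hxt⟩)
  · obtain rfl := hC.eq_of_level_eq s hs𝒜 t ht𝒜 heq ⟨x, hxs, hxt⟩
    exact mem_biUnion (Or.inl ⟨hs, ht⟩) hxs
  · refine mem_biUnion (Or.inr ⟨Or.inl hs, fun hroot => ?_⟩) hxs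
    exact hroot.2 t (Or.inr ht) hgt (hC.subset_of_level_lt t ht𝒜 s hs𝒜 hgt ⟨x, hxt, hxs⟩)

theorem tsum_netRoots_union_add_coverContent_inter_le (hC : IsNetOn C level 𝒜) {A B : Set X}
    {Λ Γ : Set S} (hΛ : IsCountableCover C 𝒜 A Λ) (hΓ : IsCountableCover C 𝒜 B Γ) :
    (∑' s : netRoots C level (Λ ∪ Γ), w s) + coverContent C w 𝒜 (A ∩ B) ≤
      (∑' s : Λ, w s) + ∑' s : Γ, w s :=
  (add_le_add_right (hC.isCountableCover_inter hΛ hΓ).coverContent_le_tsum _).trans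
    (tsum_add_tsum_inter_union_sdiff_le w (netRoots_subset _))

theorem tsum_mergedRoots_le (hC : IsNetOn C level 𝒜) {Z : ℕ → Set X} (hZ : Monotone Z)
    (hfin : ∀ n, coverContent C w 𝒜 (Z n) ≠ ∞) {Λ : ℕ → Set S}
    (hΛ : ∀ n, IsCountableCover C 𝒜 (Z n) (Λ n)) {δ : ℕ → ℝ≥0∞}
    (hδ : ∀ n, ∑' s : Λ n, w s ≤ coverContent C w 𝒜 (Z n) + δ n) (n : ℕ) :
    ∑' s : mergedRoots C level Λ n, w s ≤
      coverContent C w 𝒜 (Z n) + ∑ i ∈ Finset.range (n + 1), δ i := by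
  induction n with
  | zero => simpa [mergedRoots] using hδ 0
  | succ n ih =>
    have hmerge := hC.tsum_netRoots_union_add_coverContent_inter_le (w := w)
      (IsCountableCover.mergedRoots hΛ level n) (hΛ (n + 1))
    rw [inter_eq_left.2 (hZ n.le_succ)] at hmerge
    refine (ENNReal.add_le_add_iff_right (hfin n)).1 ?_
    calc (∑' s : mergedRoots C level Λ (n + 1), w s) + coverContent C w 𝒜 (Z n)
        ≤ (∑' s : mergedRoots C level Λ n, w s) + ∑' s : Λ (n + 1), w s := hmerge
      _ ≤ (coverContent C w 𝒜 (Z n) + ∑ i ∈ Finset.range (n + 1), δ i) +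
            (coverContent C w 𝒜 (Z (n + 1)) + δ (n + 1)) := add_le_add ih (hδ (n + 1))
      _ = coverContent C w 𝒜 (Z (n + 1)) + ∑ i ∈ Finset.range (n + 1 + 1), δ i +
            coverContent C w 𝒜 (Z n) := by
          rw [Finset.sum_range_succ _ (n + 1)]
          ring

theorem coverContent_iUnion_le (hC : IsNetOn C level 𝒜) {Z : ℕ → Set X} (hZ : Monotone Z) :
    coverContent C w 𝒜 (⋃ n, Z n) ≤ ⨆ n, coverContent C w 𝒜 (Z n) := by
  refine ENNReal.le_of_forall_pos_le_add fun ε hε hsup => ?_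
  have hfin (n : ℕ) : coverContent C w 𝒜 (Z n) ≠ ∞ := ((le_iSup _ n).trans_lt hsup).ne
  obtain ⟨δ, hδpos, hδsum⟩ :=
    ENNReal.exists_pos_sum_of_countable' (ENNReal.coe_pos.2 hε).ne' ℕ
  choose Λ hΛ hΛδ using fun n => exists_isCountableCover_tsum_le (hfin n) (hδpos n).ne'
  refine ((IsCountableCover.iUnion hΛ).netRoots level).coverContent_le_tsum.trans ?_
  refine tsum_le_of_forall_eventually_mem w (fun s hs => eventually_mem_mergedRoots hs) fun n => ?_
  calc ∑' s : mergedRoots C level Λ n, w s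
      ≤ coverContent C w 𝒜 (Z n) + ∑ i ∈ Finset.range (n + 1), δ i :=
        hC.tsum_mergedRoots_le hZ hfin hΛ hΛδ n
    _ ≤ (⨆ n, coverContent C w 𝒜 (Z n)) + ε :=
        add_le_add (le_iSup (fun n => coverContent C w 𝒜 (Z n)) n)
          ((ENNReal.sum_le_tsum _).trans hδsum.le)

theorem isChoquetCapacity_coverContent [TopologicalSpace X] (hC : IsNetOn C level 𝒜)
    (hopen : ∀ s ∈ 𝒜, IsOpen (C s)) (w : S → ℝ≥0∞) : IsChoquetCapacity (coverContent C w 𝒜) where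
  mono := coverContent_mono C w 𝒜
  iUnion_le _ hZ := hC.coverContent_iUnion_le hZ
  iInf_isOpen_le K _ := iInf_isOpen_coverContent_le hopen K

end IsNetOn

end Net

section Cylinder

variable {X : Type*} {T : X → X} {𝒰 : Set (Set X)} {𝒜 : Set (Σ n : ℕ, Fin n → Set X)}

theorem isOpen_cylinder [TopologicalSpace X] (hT : Continuous T) {V : Σ n : ℕ, Fin n → Set X}
    (hV : ∀ j, IsOpen (V.2 j)) : IsOpen (cylinder T V) :=
  isOpen_iInter_of_finite fun j => (hV j).preimage (hT.iterate j)

theorem isNetOn_cylinder (hdisj : 𝒰.PairwiseDisjoint id) (h𝒜 : ∀ V ∈ 𝒜, ∀ j, V.2 j ∈ 𝒰) :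
    IsNetOn (cylinder T) Sigma.fst 𝒜 := by
  have hletter : ∀ V ∈ 𝒜, ∀ W ∈ 𝒜, (cylinder T V ∩ cylinder T W).Nonempty →
      ∀ (i : Fin V.1) (j : Fin W.1), i.1 = j.1 → V.2 i = W.2 j := by
    rintro V hV W hW ⟨x, hxV, hxW⟩ i j hij
    refine hdisj.elim_set (h𝒜 V hV i) (h𝒜 W hW j) (T^[i] x) (mem_iInter.1 hxV i) ?_
    exact hij ▸ mem_iInter.1 hxW j
  constructor
  · intro V hV W hW hlt hmeet
    refine fun y hy => mem_iInter.2 fun i => ?_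
    rw [hletter V hV W hW hmeet i ⟨i, i.2.trans hlt⟩ rfl]
    exact mem_iInter.1 hy ⟨i, i.2.trans hlt⟩
  · rintro ⟨n, a⟩ hV ⟨m, b⟩ hW (rfl : n = m) hmeet
    exact congrArg (Sigma.mk n) (funext fun j => hletter _ hV _ hW hmeet j j rfl)

end Cylinder

theorem MUN_analytic_inner_regular_general {X : Type*} [TopologicalSpace X] {T : X → X}
    (hT : Continuous T) {𝒰 : Set (Set X)} (hopen : ∀ A ∈ 𝒰, IsOpen A)
    (hdisj : 𝒰.PairwiseDisjoint id) (w : (Σ n : ℕ, Fin n → Set X) → ℝ≥0∞) (N : ℕ)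
    {Z : Set X} (hZ : MeasureTheory.AnalyticSet Z) :
    coverContent (cylinder T) w {V | N ≤ V.1 ∧ ∀ j, V.2 j ∈ 𝒰} Z =
      ⨆ (K : Set X) (_ : K ⊆ Z ∧ IsCompact K),
        coverContent (cylinder T) w {V | N ≤ V.1 ∧ ∀ j, V.2 j ∈ 𝒰} K := by
  have hnet : IsNetOn (cylinder T) Sigma.fst {V | N ≤ V.1 ∧ ∀ j, V.2 j ∈ 𝒰} :=
    isNetOn_cylinder hdisj fun V hV => hV.2
  have hopen_cylinder : ∀ V ∈ {V : Σ n : ℕ, Fin n → Set X | N ≤ V.1 ∧ ∀ j, V.2 j ∈ 𝒰},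
      IsOpen (cylinder T V) :=
    fun V hV => isOpen_cylinder hT fun j => hopen _ (hV.2 j)
  exact (hnet.isChoquetCapacity_coverContent hopen_cylinder w).eq_iSup_isCompact hZ

/-- inner regularity of `M_N^s(𝒰,f,·)` on analytic sets, by compact subsets. -/
theorem MUN_analytic_inner_regular {X : Type*} [MetricSpace X] [CompactSpace X]
    {T : X → X} (hT : Continuous T) {f : X → ℝ} (hf : Continuous f)
    {𝒰 : Finset (Set X)} (h𝒰 : IsClopenPartition 𝒰) (s : ℝ) (N : ℕ)
    {Z : Set X} (hZ : MeasureTheory.AnalyticSet Z) :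
    MUN T f 𝒰 s N Z = ⨆ (K : Set X) (_ : K ⊆ Z ∧ IsCompact K), MUN T f 𝒰 s N K :=
  MUN_analytic_inner_regular_general hT (fun A hA => (h𝒰.1 A hA).isOpen) h𝒰.2.2
    (cylWeight T f s) N hZ
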